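/- arXiv:2105.03805 — 2 statements merged into one kernel-verified Lean document; each statement's English description precedes it below -/
import Mathlib

section
/- Let λ ∈ ℝ and let n ≥ 2 be an integer. Suppose h ∈ C²((0,L)) satisfies 2r²h(r)h''(r) = (n-1)h(r)(h(r)-1) + r h'(r)(r h'(r) - λr - (n-1)) with h(r) > 0 on (0,L), where L ∈ (0,∞) is a constant with L < -(n-1)/λ in case λ < 0. Then there exists a constant c₂ > 0 such that h(r) ≤ c₂ for all r ∈ [L/2, L). -/
open Set Filter Topology

/-!
The logarithmic derivative `v = h' / h` of a positive solution satisfies the Riccati-type equation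
`2 r² v' = m - (r v)² - (m + r v (λ r + m)) / h`, where `m = n - 1`. While `λ r + m ≥ 0`, the last
term has a favourable sign as soon as `v > 0`, so `v` is decreasing wherever `(r v)² > m`. Hence, on
`[a, L)`, `v` never exceeds a large enough constant, and `h` grows at most exponentially.
-/

section Calculus

variable {f : ℝ → ℝ} {a b G : ℝ}

theorem le_on_Ico_of_deriv_neg_of_eq (hf : ∀ x ∈ Ico a b, DifferentiableAt ℝ f x) (ha : f a ≤ G)
    (hneg : ∀ x ∈ Ico a b, f x = G → deriv f x < 0) : ∀ x ∈ Ico a b, f x ≤ G := by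
  intro x hx
  have hsub : Icc a x ⊆ Ico a b := Icc_subset_Ico_right hx.2
  exact image_le_of_deriv_right_lt_deriv_boundary
    (fun y hy => (hf y (hsub hy)).continuousAt.continuousWithinAt)
    (fun y hy => (hf y (hsub (Ico_subset_Icc_self hy))).hasDerivAt.hasDerivWithinAt)
    ha (fun y => hasDerivAt_const y G)
    (fun y hy => hneg y (hsub (Ico_subset_Icc_self hy))) ⟨hx.1, le_rfl⟩

theorem le_mul_exp_of_logDeriv_le (hf : ∀ x ∈ Ico a b, DifferentiableAt ℝ f x)
    (hpos : ∀ x ∈ Ico a b, 0 < f x) (hG : ∀ x ∈ Ico a b, logDeriv f x ≤ G) :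
    ∀ x ∈ Ico a b, f x ≤ f a * Real.exp (G * (x - a)) := by
  intro x hx
  have ha : a ∈ Ico a b := left_mem_Ico.2 (hx.1.trans_lt hx.2)
  have hlog : ∀ y ∈ Ico a b, DifferentiableAt ℝ (fun z => Real.log (f z)) y :=
    fun y hy => (hf y hy).log (hpos y hy).ne'
  have hmean : Real.log (f x) - Real.log (f a) ≤ G * (x - a) := by
    refine (convex_Ico a b).image_sub_le_mul_sub_of_deriv_le
      (fun y hy => (hlog y hy).continuousAt.continuousWithinAt)
      (fun y hy => (hlog y (interior_subset hy)).differentiableWithinAt)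
      (fun y hy => ?_) a ha x hx hx.1
    have hy' := interior_subset hy
    rw [deriv.log (hf y hy') (hpos y hy').ne', ← logDeriv_apply]
    exact hG y hy'
  calc f x = Real.exp (Real.log (f x)) := (Real.exp_log (hpos x hx)).symm
    _ ≤ Real.exp (Real.log (f a) + G * (x - a)) := Real.exp_le_exp.2 (by linarith)
    _ = f a * Real.exp (G * (x - a)) := by rw [Real.exp_add, Real.exp_log (hpos a ha)]

end Calculus

/-- `h` is a positive, twice differentiable solution on `s` of
`2 r² h h'' = m h (h - 1) + r h' (r h' - λ r - m)`. The dimension `n` enters only through the real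
parameter `m`, which stands for `n - 1`. -/
structure IsPositiveSolutionOn (m lam : ℝ) (h : ℝ → ℝ) (s : Set ℝ) : Prop where
  differentiableAt : ∀ r ∈ s, DifferentiableAt ℝ h r
  differentiableAt_deriv : ∀ r ∈ s, DifferentiableAt ℝ (deriv h) r
  ode : ∀ r ∈ s, 2 * r ^ 2 * h r * deriv (deriv h) r =
    m * h r * (h r - 1) + r * deriv h r * (r * deriv h r - lam * r - m)
  pos : ∀ r ∈ s, 0 < h r

namespace IsPositiveSolutionOn

variable {m lam a L r G : ℝ} {h : ℝ → ℝ} {s t : Set ℝ}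

theorem of_contDiffOn (hs : IsOpen s) (hreg : ContDiffOn ℝ 2 h s)
    (hode : ∀ r ∈ s, 2 * r ^ 2 * h r * deriv (deriv h) r =
      m * h r * (h r - 1) + r * deriv h r * (r * deriv h r - lam * r - m))
    (hpos : ∀ r ∈ s, 0 < h r) : IsPositiveSolutionOn m lam h s where
  differentiableAt r hr := (hreg.contDiffAt (hs.mem_nhds hr)).differentiableAt two_ne_zero
  differentiableAt_deriv r hr :=
    ((hreg.deriv_of_isOpen (m := 1) hs (by norm_num)).contDiffAt
      (hs.mem_nhds hr)).differentiableAt one_ne_zero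
  ode := hode
  pos := hpos

theorem mono (hh : IsPositiveSolutionOn m lam h t) (hst : s ⊆ t) :
    IsPositiveSolutionOn m lam h s where
  differentiableAt r hr := hh.differentiableAt r (hst hr)
  differentiableAt_deriv r hr := hh.differentiableAt_deriv r (hst hr)
  ode r hr := hh.ode r (hst hr)
  pos r hr := hh.pos r (hst hr)

theorem differentiableAt_logDeriv (hh : IsPositiveSolutionOn m lam h s) (hr : r ∈ s) :
    DifferentiableAt ℝ (logDeriv h) r :=
  (hh.differentiableAt_deriv r hr).div (hh.differentiableAt r hr) (hh.pos r hr).ne'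

theorem two_mul_sq_mul_deriv_logDeriv (hh : IsPositiveSolutionOn m lam h s) (hr : r ∈ s) :
    2 * r ^ 2 * deriv (logDeriv h) r =
      m - (r * logDeriv h r) ^ 2 - (m + r * logDeriv h r * (lam * r + m)) / h r := by
  have hne : h r ≠ 0 := (hh.pos r hr).ne'
  have hquot : deriv (logDeriv h) r =
      (deriv (deriv h) r * h r - deriv h r * deriv h r) / h r ^ 2 :=
    deriv_div (hh.differentiableAt_deriv r hr) (hh.differentiableAt r hr) hne
  rw [hquot, logDeriv_apply]
  field_simp
  linear_combination hh.ode r hr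

theorem deriv_logDeriv_neg (hh : IsPositiveSolutionOn m lam h s) (hr : r ∈ s) (hm : 0 ≤ m)
    (hlam : 0 ≤ lam * r + m) (hv : 0 ≤ r * logDeriv h r) (hlarge : m < (r * logDeriv h r) ^ 2) :
    deriv (logDeriv h) r < 0 := by
  have hquot : 0 ≤ (m + r * logDeriv h r * (lam * r + m)) / h r :=
    div_nonneg (add_nonneg hm (mul_nonneg hv hlam)) (hh.pos r hr).le
  have hprod : 2 * r ^ 2 * deriv (logDeriv h) r < 0 := by
    rw [hh.two_mul_sq_mul_deriv_logDeriv hr]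
    linarith
  exact neg_of_mul_neg_right hprod (by positivity)

theorem logDeriv_le (hh : IsPositiveSolutionOn m lam h (Ico a L)) (ha : 0 < a) (hm : 0 ≤ m)
    (hlam : ∀ r ∈ Ico a L, 0 ≤ lam * r + m) (hG : m + 1 ≤ a * G) (hGa : logDeriv h a ≤ G) :
    ∀ r ∈ Ico a L, logDeriv h r ≤ G := by
  refine le_on_Ico_of_deriv_neg_of_eq (fun r hr => hh.differentiableAt_logDeriv hr) hGa ?_
  rintro r hr rfl
  have hv : 0 < logDeriv h r := pos_of_mul_pos_right (by linarith) ha.le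
  have hrv : m + 1 ≤ r * logDeriv h r := hG.trans (by gcongr; exact hr.1)
  exact hh.deriv_logDeriv_neg hr hm (hlam r hr) (by linarith) (by nlinarith)

end IsPositiveSolutionOn

theorem uniform_upper_bound_general {m lam a L : ℝ} {h : ℝ → ℝ}
    (hh : IsPositiveSolutionOn m lam h (Ico a L)) (ha : 0 < a) (hm : 0 ≤ m)
    (hlam : ∀ r ∈ Ico a L, 0 ≤ lam * r + m) : ∃ c : ℝ, 0 < c ∧ ∀ r ∈ Ico a L, h r ≤ c := by
  set G := max (logDeriv h a) ((m + 1) / a)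
  have hG : m + 1 ≤ a * G := (div_le_iff₀' ha).1 (le_max_right _ _)
  have hG0 : 0 ≤ G := le_max_of_le_right (by positivity)
  have hexp := le_mul_exp_of_logDeriv_le hh.differentiableAt hh.pos
    (hh.logDeriv_le ha hm hlam hG (le_max_left _ _))
  refine ⟨max 1 (h a * Real.exp (G * (L - a))), by positivity, fun r hr => le_max_of_le_right ?_⟩
  have hha : 0 < h a := hh.pos a (left_mem_Ico.2 (hr.1.trans_lt hr.2))
  have hexponent : G * (r - a) ≤ G * (L - a) :=
    mul_le_mul_of_nonneg_left (sub_le_sub_right hr.2.le a) hG0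
  calc h r ≤ h a * Real.exp (G * (r - a)) := hexp r hr
    _ ≤ h a * Real.exp (G * (L - a)) :=
      mul_le_mul_of_nonneg_left (Real.exp_le_exp.2 hexponent) hha.le

theorem mul_add_nonneg_of_le_neg_div {m lam r : ℝ} (hm : 0 ≤ m) (hr : 0 ≤ r)
    (hle : lam < 0 → r ≤ -m / lam) : 0 ≤ lam * r + m := by
  rcases lt_or_ge lam 0 with hneg | hnonneg
  · linarith [(le_div_iff_of_neg' hneg).1 (hle hneg)]
  · positivity

theorem uniform_upper_bound (lam : ℝ) (n : ℕ) (hn2 : 2 ≤ n) (L : ℝ) (hL : 0 < L)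
    (hLlam : lam < 0 → L < -((n : ℝ) - 1) / lam) (h : ℝ → ℝ)
    (hreg : ContDiffOn ℝ 2 h (Set.Ioo 0 L))
    (hode : ∀ r ∈ Set.Ioo (0 : ℝ) L,
      2 * r ^ 2 * h r * deriv (deriv h) r =
        ((n : ℝ) - 1) * h r * (h r - 1) +
          r * deriv h r * (r * deriv h r - lam * r - ((n : ℝ) - 1)))
    (hpos : ∀ r ∈ Set.Ioo (0 : ℝ) L, 0 < h r) :
    ∃ c₂ : ℝ, 0 < c₂ ∧ ∀ r ∈ Set.Ico (L / 2) L, h r ≤ c₂ := by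
  have hm : (0 : ℝ) ≤ (n : ℝ) - 1 := sub_nonneg.2 (by exact_mod_cast one_le_two.trans hn2)
  have hsub : Ico (L / 2) L ⊆ Ioo 0 L := fun r hr => ⟨(half_pos hL).trans_le hr.1, hr.2⟩
  have hh := (IsPositiveSolutionOn.of_contDiffOn isOpen_Ioo hreg hode hpos).mono hsub
  exact uniform_upper_bound_general hh (half_pos hL) hm fun r hr =>
    mul_add_nonneg_of_le_neg_div hm (hsub hr).1.le fun hneg => (hr.2.trans (hLlam hneg)).le
end

section
/- Let μ₁ < 0 and let n ≥ 2 be an integer. Let h ∈ C²((0,∞)) ∩ C¹([0,∞)) be a solution of the steady equation 2r²h(r)h''(r) = (n-1)h(r)(h(r)-1) + r h'(r)(r h'(r) - (n-1)), h(r) > 0 for r > 0, with h(0) = 1 and h'(0) = μ₁, and set u(r) = r h(r). Then: if n ≥ 4, then u'(r) > 0 for all r > 0; if 2 ≤ n < 4, then either u'(r) > 0 for all r > 0, or there exists a constant s₀ > 0 such that u'(r) > 0 for 0 < r < s₀, u'(s₀) = 0, and u'(r) < 0 for r > s₀. Moreover, for any n ≥ 2, if u'(r) > 0 for all r > 0,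 then u'(r) → 0 as r → ∞. -/
open Set Filter Topology

/-- `h` is a solution of the steady equation
`2r²h h'' = (n-1)h(h-1) + r h'(r h' - (n-1))`, `h > 0` on `(0,∞)`,
with `h ∈ C²((0,∞)) ∩ C¹([0,∞))`, `h(0) = 1` and `h'(0) = μ₁`. -/
def IsSteadySol (n : ℕ) (μ₁ : ℝ) (h : ℝ → ℝ) : Prop :=
  ContDiffOn ℝ 2 h (Set.Ioi 0) ∧ ContDiffOn ℝ 1 h (Set.Ici 0) ∧
  (∀ r : ℝ, 0 < r →
    2 * r ^ 2 * h r * deriv (deriv h) r =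
      ((n : ℝ) - 1) * h r * (h r - 1) +
        r * deriv h r * (r * deriv h r - ((n : ℝ) - 1)) ∧ 0 < h r) ∧
  h 0 = 1 ∧ derivWithin h (Set.Ici 0) 0 = μ₁

/-!
Writing `m = n - 1` and `w = u' = h + r h'`, the steady equation becomes the first order equation
`2 u w' = w (w + 2 h - m) + (m - 3) h ^ 2`, and `w → 1` as `r → 0`. If `3 ≤ m` the last term is
nonnegative, so an integrating factor keeps `w` positive. If `m < 3` then `w' < 0` at every zero
of `w`, so `w` has at most one zero and is negative beyond it.

Suppose `0 < m`, `h'(0) < 0` and `w > 0`. Since `h'' < 0` wherever `h' = 0` and `h < 1`, the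
function `h` is decreasing, so `0 < w < h`. The function `r h' + (m / 2) log h` eventually has
derivative at most `-c / r` with `c > 0`, so it tends to `-∞`. As `r h' > -h` stays bounded below,
`log h → -∞`. Hence `h`, and with it `w`, tends to `0`.
-/

section Calculus

variable {a b : ℝ} {f g : ℝ → ℝ}

lemma exists_first_zero (hf : ContinuousOn f (Ioi a)) (hpos : ∀ᶠ r in 𝓝[>] a, 0 < f r)
    (hab : a < b) (hb : f b ≤ 0) :
    ∃ z, a < z ∧ (∀ r, a < r → r < z → 0 < f r) ∧ f z = 0 := by
  obtain ⟨d, had, hd⟩ := mem_nhdsGT_iff_exists_Ioo_subset.1 hpos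
  obtain ⟨c, hac, hcd⟩ := exists_between (mem_Ioi.1 had)
  have pos_near : ∀ r ∈ Ioc a c, 0 < f r := fun r hr ↦ hd ⟨hr.1, hr.2.trans_lt hcd⟩
  have zero_between : ∀ r > a, f r ≤ 0 → ∃ z ∈ Icc c r, f z = 0 := by
    intro r har hr
    have hcr : c ≤ r := le_of_not_ge fun hrc ↦ (pos_near r ⟨har, hrc⟩).not_ge hr
    exact intermediate_value_Icc' hcr (hf.mono fun x hx ↦ hac.trans_le hx.1)
      ⟨hr, (pos_near c ⟨hac, le_rfl⟩).le⟩
  have hcompact : IsCompact (Icc c b ∩ f ⁻¹' {0}) :=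
    isCompact_Icc.of_isClosed_subset
      ((hf.mono fun x hx ↦ hac.trans_le hx.1).preimage_isClosed_of_isClosed isClosed_Icc
        isClosed_singleton) inter_subset_left
  obtain ⟨z, ⟨hz, hfz⟩, hleast⟩ := hcompact.exists_isLeast (zero_between b hab hb)
  refine ⟨z, hac.trans_le hz.1, fun r har hrz ↦ ?_, hfz⟩
  by_contra! hr
  obtain ⟨y, hy, hfy⟩ := zero_between r har hr
  exact hrz.not_ge ((hleast ⟨⟨hy.1, hy.2.trans (hrz.le.trans hz.2)⟩, hfy⟩).trans hy.2)

lemma pos_of_deriv_pos_at_first_zero (hf : ContinuousOn f (Ioi a))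
    (hpos : ∀ᶠ r in 𝓝[>] a, 0 < f r)
    (hzero : ∀ z > a, (∀ r, a < r → r < z → 0 < f r) → f z = 0 → 0 < deriv f z) :
    ∀ r > a, 0 < f r := by
  by_contra! ⟨b, hab, hb⟩
  obtain ⟨z, haz, hleft, hz⟩ := exists_first_zero hf hpos hab hb
  have hsign : ∀ᶠ r in 𝓝[<] z, SignType.sign (f r) = SignType.sign (r - z) :=
    (eventually_nhdsWithin_sign_eq_of_deriv_pos (hzero z haz hleft hz) hz).filter_mono
      nhdsWithin_le_nhds
  obtain ⟨r, hr, har, hrz⟩ := (hsign.and (Ioo_mem_nhdsLT haz)).exists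
  rw [sign_pos (hleft r har hrz), sign_neg (sub_neg.2 hrz)] at hr
  contradiction

lemma neg_of_deriv_neg_at_zeros (hf : ContinuousOn f (Ioi a)) (ha : f a = 0)
    (hzero : ∀ z ≥ a, f z = 0 → deriv f z < 0) :
    ∀ r > a, f r < 0 := by
  have deriv_neg_pos : ∀ z ≥ a, f z = 0 → 0 < deriv (-f) z := fun z hz hfz ↦ by
    simpa only [deriv.neg, Left.neg_pos_iff] using hzero z hz hfz
  have hright : ∀ᶠ r in 𝓝[>] a, 0 < (-f) r := by
    filter_upwards [nhdsWithin_le_nhds (eventually_nhdsWithin_sign_eq_of_deriv_pos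
      (deriv_neg_pos a le_rfl ha) (by simp [ha])), self_mem_nhdsWithin] with r hr har
    rwa [sign_pos (sub_pos.2 har), sign_eq_one_iff] at hr
  have hneg := pos_of_deriv_pos_at_first_zero hf.neg hright fun z haz _ hz ↦
    deriv_neg_pos z haz.le (neg_eq_zero.1 hz)
  exact fun r hr ↦ neg_pos.1 (hneg r hr)

lemma pos_or_exists_sign_change (hf : ContinuousOn f (Ioi a))
    (hpos : ∀ᶠ r in 𝓝[>] a, 0 < f r) (hzero : ∀ z > a, f z = 0 → deriv f z < 0) :
    (∀ r > a, 0 < f r) ∨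
      ∃ z, a < z ∧ (∀ r, a < r → r < z → 0 < f r) ∧ f z = 0 ∧ ∀ r, z < r → f r < 0 := by
  refine or_iff_not_imp_left.2 fun hnot ↦ ?_
  push Not at hnot
  obtain ⟨b, hab, hb⟩ := hnot
  obtain ⟨z, haz, hleft, hz⟩ := exists_first_zero hf hpos hab hb
  exact ⟨z, haz, hleft, hz, neg_of_deriv_neg_at_zeros (hf.mono (Ioi_subset_Ioi haz.le)) hz
    fun y hy ↦ hzero y (haz.trans_le hy)⟩

lemma exists_hasDerivAt_of_continuousOn_Icc (hab : a ≤ b) (hg : ContinuousOn g (Icc a b)) :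
    ∃ G : ℝ → ℝ, Continuous G ∧ ∀ r ∈ Icc a b, HasDerivAt G (g r) r := by
  have hcont : Continuous (IccExtend hab ((Icc a b).domRestrict g)) := hg.domRestrict.Icc_extend'
  have hderiv := fun r ↦ (hcont.integral_hasStrictDerivAt a r).hasDerivAt
  refine ⟨_, continuous_iff_continuousAt.2 fun r ↦ (hderiv r).continuousAt, fun r hr ↦ ?_⟩
  exact (hderiv r).congr_deriv (IccExtend_of_mem hab _ hr)

lemma pos_of_mul_le_deriv (hab : a ≤ b) (hf : ContinuousOn f (Icc a b))
    (hf' : DifferentiableOn ℝ f (Ioo a b)) (hg : ContinuousOn g (Icc a b))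
    (hle : ∀ r ∈ Ioo a b, g r * f r ≤ deriv f r) (ha : 0 < f a) : 0 < f b := by
  obtain ⟨G, hGcont, hG⟩ := exists_hasDerivAt_of_continuousOn_Icc hab hg
  have hderiv : ∀ r ∈ Ioo a b, HasDerivAt (fun s ↦ Real.exp (-G s) * f s)
      (Real.exp (-G r) * (deriv f r - g r * f r)) r := fun r hr ↦
    ((hG r (Ioo_subset_Icc_self hr)).neg.exp.mul
      (hf'.hasDerivAt (isOpen_Ioo.mem_nhds hr))).congr_deriv (by simp only [Pi.neg_apply]; ring)
  have hmono : MonotoneOn (fun s ↦ Real.exp (-G s) * f s) (Icc a b) := by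
    refine monotoneOn_of_hasDerivWithinAt_nonneg (convex_Icc a b)
      ((Real.continuous_exp.comp hGcont.neg).continuousOn.mul hf)
      (f' := fun r ↦ Real.exp (-G r) * (deriv f r - g r * f r)) ?_ ?_ <;> rw [interior_Icc]
    · exact fun r hr ↦ (hderiv r hr).hasDerivWithinAt
    · exact fun r hr ↦ mul_nonneg (Real.exp_nonneg _) (sub_nonneg.2 (hle r hr))
  have hb : 0 < Real.exp (-G b) * f b :=
    (mul_pos (Real.exp_pos (-G a)) ha).trans_le
      (hmono (left_mem_Icc.2 hab) (right_mem_Icc.2 hab) hab)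
  exact pos_of_mul_pos_right hb (Real.exp_nonneg _)

lemma tendsto_atBot_of_deriv_le (hf : ∀ᶠ r in atTop, DifferentiableAt ℝ f r)
    (hg : ∀ᶠ r in atTop, DifferentiableAt ℝ g r) (hle : ∀ᶠ r in atTop, deriv f r ≤ deriv g r)
    (hbot : Tendsto g atTop atBot) : Tendsto f atTop atBot := by
  obtain ⟨c, hc⟩ := eventually_atTop.1 (hf.and (hg.and hle))
  have hderiv : ∀ r ≥ c, HasDerivAt (f - g) (deriv f r - deriv g r) r := fun r hr ↦
    (hc r hr).1.hasDerivAt.sub (hc r hr).2.1.hasDerivAt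
  have hanti : AntitoneOn (f - g) (Ici c) :=
    antitoneOn_of_hasDerivWithinAt_nonpos (convex_Ici c)
      (fun r hr ↦ (hderiv r hr).continuousAt.continuousWithinAt)
      (fun r hr ↦ (hderiv r (interior_subset hr)).hasDerivWithinAt)
      (fun r hr ↦ sub_nonpos.2 (hc r (interior_subset hr)).2.2)
  refine tendsto_atBot_mono' _ ?_ (tendsto_atBot_add_const_right _ ((f - g) c) hbot)
  filter_upwards [eventually_ge_atTop c] with r hr
  exact sub_le_iff_le_add'.1 (hanti self_mem_Ici hr hr)

end Calculus

/-- The function `u(r) = r h(r)` attached to a solution `h` of the steady equation. -/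
def steadyU (h : ℝ → ℝ) (r : ℝ) : ℝ := r * h r

/-- Solutions of the steady equation with the integer `n - 1` replaced by a real parameter `m`,
with the same regularity and initial conditions as in `IsSteadySol`. -/
structure IsRealSteadySol (m μ : ℝ) (h : ℝ → ℝ) : Prop where
  contDiffOn_Ioi : ContDiffOn ℝ 2 h (Ioi 0)
  contDiffOn_Ici : ContDiffOn ℝ 1 h (Ici 0)
  ode : ∀ r > 0, 2 * r ^ 2 * h r * deriv (deriv h) r =
    m * h r * (h r - 1) + r * deriv h r * (r * deriv h r - m)
  pos : ∀ r > 0, 0 < h r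
  map_zero : h 0 = 1
  derivWithin_zero : derivWithin h (Ici 0) 0 = μ

lemma IsSteadySol.isRealSteadySol {n : ℕ} {μ : ℝ} {h : ℝ → ℝ} (hsol : IsSteadySol n μ h) :
    IsRealSteadySol (n - 1) μ h :=
  let ⟨hIoi, hIci, hode, hzero, hderiv⟩ := hsol
  ⟨hIoi, hIci, fun r hr ↦ (hode r hr).1, fun r hr ↦ (hode r hr).2, hzero, hderiv⟩

/-- The decreasing quantity `r h' + (m / 2) log h` that forces `h → 0` at infinity. -/
noncomputable def steadyLyapunov (m : ℝ) (h : ℝ → ℝ) (r : ℝ) : ℝ :=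
  r * deriv h r + m / 2 * Real.log (h r)

namespace IsRealSteadySol

variable {m μ r : ℝ} {h : ℝ → ℝ} (hsol : IsRealSteadySol m μ h)
include hsol

lemma hasDerivAt (hr : 0 < r) : HasDerivAt h (deriv h r) r :=
  (hsol.contDiffOn_Ioi.differentiableOn two_ne_zero).hasDerivAt (Ioi_mem_nhds hr)

lemma hasDerivAt_deriv (hr : 0 < r) : HasDerivAt (deriv h) (deriv (deriv h) r) r :=
  ((hsol.contDiffOn_Ioi.deriv_of_isOpen isOpen_Ioi one_add_one_eq_two.le).differentiableOn
    one_ne_zero).hasDerivAt (Ioi_mem_nhds hr)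

lemma tendsto_nhdsGT_zero : Tendsto h (𝓝[>] 0) (𝓝 1) :=
  hsol.map_zero ▸ (hsol.contDiffOn_Ici.continuousOn 0 self_mem_Ici).mono Ioi_subset_Ici_self

lemma tendsto_deriv_nhdsGT_zero : Tendsto (deriv h) (𝓝[>] 0) (𝓝 μ) := by
  have hcont : ContinuousOn (derivWithin h (Ici 0)) (Ici 0) :=
    hsol.contDiffOn_Ici.continuousOn_derivWithin (uniqueDiffOn_Ici 0) le_rfl
  have htendsto : Tendsto (derivWithin h (Ici 0)) (𝓝[>] 0) (𝓝 μ) :=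
    hsol.derivWithin_zero ▸ (hcont 0 self_mem_Ici).mono Ioi_subset_Ici_self
  refine htendsto.congr' ?_
  filter_upwards [self_mem_nhdsWithin] with r hr using derivWithin_of_mem_nhds (Ici_mem_nhds hr)

lemma deriv_steadyU (hr : 0 < r) : deriv (steadyU h) r = h r + r * deriv h r := by
  have := ((hasDerivAt_id r).mul (hsol.hasDerivAt hr)).deriv
  rwa [one_mul] at this

lemma hasDerivAt_deriv_steadyU (hr : 0 < r) :
    HasDerivAt (deriv (steadyU h)) (2 * deriv h r + r * deriv (deriv h) r) r := by
  have heq : deriv (steadyU h) =ᶠ[𝓝 r] fun s ↦ h s + s * deriv h s := by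
    filter_upwards [Ioi_mem_nhds hr] with s hs using hsol.deriv_steadyU hs
  refine HasDerivAt.congr_of_eventuallyEq ?_ heq
  exact ((hsol.hasDerivAt hr).add ((hasDerivAt_id r).mul (hsol.hasDerivAt_deriv hr))).congr_deriv
    (by simp only [id_eq]; ring)

lemma continuousOn_deriv_steadyU : ContinuousOn (deriv (steadyU h)) (Ioi 0) :=
  fun _ hr ↦ (hsol.hasDerivAt_deriv_steadyU hr).continuousAt.continuousWithinAt

lemma steadyU_pos (hr : 0 < r) : 0 < steadyU h r := mul_pos hr (hsol.pos r hr)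

lemma ode_steadyU (hr : 0 < r) :
    2 * steadyU h r * deriv (deriv (steadyU h)) r =
      deriv (steadyU h) r * (deriv (steadyU h) r + 2 * h r - m) + (m - 3) * h r ^ 2 := by
  rw [(hsol.hasDerivAt_deriv_steadyU hr).deriv, hsol.deriv_steadyU hr, steadyU]
  linear_combination hsol.ode r hr

lemma tendsto_deriv_steadyU_nhdsGT_zero : Tendsto (deriv (steadyU h)) (𝓝[>] 0) (𝓝 1) := by
  have hid : Tendsto (fun r : ℝ ↦ r) (𝓝[>] 0) (𝓝 0) := nhdsWithin_le_nhds
  have hsum : Tendsto (fun r ↦ h r + r * deriv h r) (𝓝[>] 0) (𝓝 1) := by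
    simpa only [zero_mul, add_zero] using
      hsol.tendsto_nhdsGT_zero.add (hid.mul hsol.tendsto_deriv_nhdsGT_zero)
  refine hsum.congr' ?_
  filter_upwards [self_mem_nhdsWithin] with r hr using (hsol.deriv_steadyU hr).symm

lemma eventually_deriv_steadyU_pos : ∀ᶠ r in 𝓝[>] 0, 0 < deriv (steadyU h) r :=
  hsol.tendsto_deriv_steadyU_nhdsGT_zero.eventually_const_lt one_pos

lemma deriv_steadyU_pos_of_three_le (hm : 3 ≤ m) (hr : 0 < r) : 0 < deriv (steadyU h) r := by
  obtain ⟨c, hc, hc0, hcr⟩ :=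
    (hsol.eventually_deriv_steadyU_pos.and (Ioo_mem_nhdsGT hr)).exists
  have hsub : Icc c r ⊆ Ioi 0 := fun s hs ↦ hc0.trans_le hs.1
  have hu := hsol.continuousOn_deriv_steadyU.mono hsub
  have hh : ContinuousOn h (Icc c r) := hsol.contDiffOn_Ioi.continuousOn.mono hsub
  refine pos_of_mul_le_deriv hcr.le hu
    (g := fun s ↦ (deriv (steadyU h) s + 2 * h s - m) / (2 * steadyU h s)) ?_ ?_ ?_ hc
  · exact fun s hs ↦ (hsol.hasDerivAt_deriv_steadyU
      (hsub (Ioo_subset_Icc_self hs))).differentiableAt.differentiableWithinAt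
  · refine ContinuousOn.div (by fun_prop) (by unfold steadyU; fun_prop) fun s hs ↦ ?_
    exact (mul_pos two_pos (hsol.steadyU_pos (hsub hs))).ne'
  · intro s hs
    have hs0 : 0 < s := hsub (Ioo_subset_Icc_self hs)
    rw [div_mul_eq_mul_div, div_le_iff₀ (mul_pos two_pos (hsol.steadyU_pos hs0))]
    have hnonneg : 0 ≤ (m - 3) * h s ^ 2 := mul_nonneg (sub_nonneg.2 hm) (sq_nonneg _)
    linarith [hsol.ode_steadyU hs0]

lemma deriv_deriv_steadyU_neg (hm : m < 3) (hr : 0 < r) (hzero : deriv (steadyU h) r = 0) :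
    deriv (deriv (steadyU h)) r < 0 := by
  have hode := hsol.ode_steadyU hr
  rw [hzero, zero_mul, zero_add] at hode
  have hneg : 2 * steadyU h r * deriv (deriv (steadyU h)) r < 0 :=
    hode ▸ mul_neg_of_neg_of_pos (sub_neg.2 hm) (pow_pos (hsol.pos r hr) 2)
  exact neg_of_mul_neg_right hneg (mul_pos two_pos (hsol.steadyU_pos hr)).le

lemma deriv_deriv_neg_of_lt_one (hm : 0 < m) (hr : 0 < r) (hlt : h r < 1)
    (hzero : deriv h r = 0) : deriv (deriv h) r < 0 := by
  have hode := hsol.ode r hr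
  rw [hzero, mul_zero, zero_mul, add_zero] at hode
  have hpos := hsol.pos r hr
  have hneg : 2 * r ^ 2 * h r * deriv (deriv h) r < 0 :=
    hode ▸ mul_neg_of_pos_of_neg (mul_pos hm hpos) (sub_neg.2 hlt)
  exact neg_of_mul_neg_right hneg (by positivity)

lemma strictAntiOn_Icc (hneg : ∀ s, 0 < s → s < r → deriv h s < 0) :
    StrictAntiOn h (Icc 0 r) := by
  refine strictAntiOn_of_deriv_neg (convex_Icc 0 r)
    (hsol.contDiffOn_Ici.continuousOn.mono Icc_subset_Ici_self) fun s hs ↦ ?_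
  rw [interior_Icc] at hs
  exact hneg s hs.1 hs.2

lemma deriv_neg (hm : 0 < m) (hμ : μ < 0) (hr : 0 < r) : deriv h r < 0 := by
  have hcont : ContinuousOn (-deriv h) (Ioi 0) := fun s hs ↦
    (hsol.hasDerivAt_deriv hs).neg.continuousAt.continuousWithinAt
  have hinit : ∀ᶠ s in 𝓝[>] 0, 0 < (-deriv h) s :=
    (hsol.tendsto_deriv_nhdsGT_zero.eventually_lt_const hμ).mono fun s hs ↦ neg_pos.2 hs
  refine neg_pos.1 (pos_of_deriv_pos_at_first_zero hcont hinit (fun z hz hleft hzero ↦ ?_) r hr)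
  have hlt : h z < 1 := hsol.map_zero ▸
    hsol.strictAntiOn_Icc (fun s hs hsz ↦ neg_pos.1 (hleft s hs hsz))
      (left_mem_Icc.2 hz.le) (right_mem_Icc.2 hz.le) hz
  rw [deriv.neg, neg_pos]
  exact hsol.deriv_deriv_neg_of_lt_one hm hz hlt (neg_eq_zero.1 hzero)

lemma strictAntiOn (hm : 0 < m) (hμ : μ < 0) : StrictAntiOn h (Ici 0) :=
  fun _ ha _ hb hab ↦ hsol.strictAntiOn_Icc (fun _ hs _ ↦ hsol.deriv_neg hm hμ hs)
    ⟨ha, hab.le⟩ (right_mem_Icc.2 hb) hab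

lemma hasDerivAt_steadyLyapunov (hr : 0 < r) :
    HasDerivAt (steadyLyapunov m h)
      ((r * deriv h r * (2 * h r + r * deriv h r) + m * h r * (h r - 1)) / (2 * r * h r)) r := by
  have hpos := hsol.pos r hr
  refine (((hasDerivAt_id r).mul (hsol.hasDerivAt_deriv hr)).add
    (((hsol.hasDerivAt hr).log hpos.ne').const_mul (m / 2))).congr_deriv ?_
  simp only [id_eq]
  field_simp
  linear_combination hsol.ode r hr

lemma deriv_steadyLyapunov_le (hr : 0 < r) (hneg : deriv h r < 0)
    (hu : 0 < deriv (steadyU h) r) :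
    deriv (steadyLyapunov m h) r ≤ m / 2 * (h r - 1) / r := by
  have hpos := hsol.pos r hr
  rw [hsol.deriv_steadyU hr] at hu
  have hprod : r * deriv h r * (2 * h r + r * deriv h r) ≤ 0 :=
    mul_nonpos_of_nonpos_of_nonneg (mul_neg_of_pos_of_neg hr hneg).le (by linarith)
  calc deriv (steadyLyapunov m h) r
      = (r * deriv h r * (2 * h r + r * deriv h r) + m * h r * (h r - 1)) / (2 * r * h r) :=
        (hsol.hasDerivAt_steadyLyapunov hr).deriv
    _ ≤ m * h r * (h r - 1) / (2 * r * h r) := by gcongr; linarith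
    _ = m / 2 * (h r - 1) / r := by field_simp

lemma tendsto_steadyLyapunov_atBot (hm : 0 < m) (hμ : μ < 0)
    (hu : ∀ r > 0, 0 < deriv (steadyU h) r) :
    Tendsto (steadyLyapunov m h) atTop atBot := by
  have hanti := hsol.strictAntiOn hm hμ
  have hone : h 1 < 1 := by
    simpa only [hsol.map_zero] using hanti self_mem_Ici (zero_le_one' ℝ) one_pos
  have hslope : m / 2 * (h 1 - 1) < 0 := mul_neg_of_pos_of_neg (half_pos hm) (sub_neg.2 hone)
  refine tendsto_atBot_of_deriv_le (g := fun r ↦ m / 2 * (h 1 - 1) * Real.log r) ?_ ?_ ?_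
    (Real.tendsto_log_atTop.const_mul_atTop_of_neg hslope)
  · filter_upwards [eventually_gt_atTop 0] with r hr
    exact (hsol.hasDerivAt_steadyLyapunov hr).differentiableAt
  · filter_upwards [eventually_gt_atTop 0] with r hr
    exact (Real.differentiableAt_log hr.ne').const_mul _
  · filter_upwards [eventually_ge_atTop 1] with r hr
    have hr0 : 0 < r := one_pos.trans_le hr
    have hle : h r ≤ h 1 := hanti.antitoneOn (zero_le_one' ℝ) hr0.le hr
    calc deriv (steadyLyapunov m h) r
        ≤ m / 2 * (h r - 1) / r :=
          hsol.deriv_steadyLyapunov_le hr0 (hsol.deriv_neg hm hμ hr0) (hu r hr0)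
      _ ≤ m / 2 * (h 1 - 1) / r := by gcongr
      _ = deriv (fun s ↦ m / 2 * (h 1 - 1) * Real.log s) r := by
          rw [deriv_const_mul_field, Real.deriv_log, div_eq_mul_inv]

lemma tendsto_atTop_zero (hm : 0 < m) (hμ : μ < 0) (hu : ∀ r > 0, 0 < deriv (steadyU h) r) :
    Tendsto h atTop (𝓝 0) := by
  have hlog_le : ∀ r > 0, m / 2 * Real.log (h r) ≤ steadyLyapunov m h r + 1 := by
    intro r hr
    have hlt : h r < 1 := hsol.map_zero ▸ hsol.strictAntiOn hm hμ self_mem_Ici hr.le hr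
    have hur := hu r hr
    rw [hsol.deriv_steadyU hr] at hur
    rw [steadyLyapunov]
    linarith
  have hmul_log : Tendsto (fun r ↦ m / 2 * Real.log (h r)) atTop atBot :=
    tendsto_atBot_mono' _ ((eventually_gt_atTop 0).mono hlog_le)
      (tendsto_atBot_add_const_right _ 1 (hsol.tendsto_steadyLyapunov_atBot hm hμ hu))
  have hlog : Tendsto (fun r ↦ Real.log (h r)) atTop atBot :=
    (tendsto_const_mul_atBot_of_pos (half_pos hm)).1 hmul_log
  refine (Real.tendsto_exp_atBot.comp hlog).congr' ?_
  filter_upwards [eventually_gt_atTop 0] with r hr using Real.exp_log (hsol.pos r hr)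

lemma tendsto_deriv_steadyU_atTop_zero (hm : 0 < m) (hμ : μ < 0)
    (hu : ∀ r > 0, 0 < deriv (steadyU h) r) :
    Tendsto (deriv (steadyU h)) atTop (𝓝 0) := by
  refine tendsto_of_tendsto_of_tendsto_of_le_of_le' tendsto_const_nhds
    (hsol.tendsto_atTop_zero hm hμ hu) ((eventually_gt_atTop 0).mono fun r hr ↦ (hu r hr).le) ?_
  filter_upwards [eventually_gt_atTop 0] with r hr
  rw [hsol.deriv_steadyU hr]
  exact add_le_of_nonpos_right (mul_neg_of_pos_of_neg hr (hsol.deriv_neg hm hμ hr)).le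

end IsRealSteadySol

theorem steady_u_derivative_sign_general {m μ : ℝ} {h : ℝ → ℝ} (hsol : IsRealSteadySol m μ h) :
    (3 ≤ m → ∀ r > 0, 0 < deriv (steadyU h) r) ∧
    (m < 3 →
      (∀ r > 0, 0 < deriv (steadyU h) r) ∨
      ∃ s₀, 0 < s₀ ∧ (∀ r, 0 < r → r < s₀ → 0 < deriv (steadyU h) r) ∧
        deriv (steadyU h) s₀ = 0 ∧ ∀ r, s₀ < r → deriv (steadyU h) r < 0) ∧
    (0 < m → μ < 0 → (∀ r > 0, 0 < deriv (steadyU h) r) →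
      Tendsto (deriv (steadyU h)) atTop (𝓝 0)) :=
  ⟨fun hm _ hr ↦ hsol.deriv_steadyU_pos_of_three_le hm hr,
    fun hm ↦ pos_or_exists_sign_change hsol.continuousOn_deriv_steadyU
      hsol.eventually_deriv_steadyU_pos fun _ hz ↦ hsol.deriv_deriv_steadyU_neg hm hz,
    hsol.tendsto_deriv_steadyU_atTop_zero⟩

theorem steady_u_derivative_sign (μ₁ : ℝ) (n : ℕ) (hμ : μ₁ < 0) (hn2 : 2 ≤ n)
    (h : ℝ → ℝ) (hsol : IsSteadySol n μ₁ h) :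
    (4 ≤ n → ∀ r : ℝ, 0 < r → 0 < deriv (fun s : ℝ => s * h s) r) ∧
    (n < 4 →
      (∀ r : ℝ, 0 < r → 0 < deriv (fun s : ℝ => s * h s) r) ∨
      (∃ s₀ : ℝ, 0 < s₀ ∧
        (∀ r : ℝ, 0 < r → r < s₀ → 0 < deriv (fun s : ℝ => s * h s) r) ∧
        deriv (fun s : ℝ => s * h s) s₀ = 0 ∧
        (∀ r : ℝ, s₀ < r → deriv (fun s : ℝ => s * h s) r < 0))) ∧
    ((∀ r : ℝ, 0 < r → 0 < deriv (fun s : ℝ => s * h s) r) →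
      Filter.Tendsto (deriv (fun s : ℝ => s * h s)) Filter.atTop (nhds 0)) := by
  obtain ⟨hlarge, hsmall, hlim⟩ := steady_u_derivative_sign_general hsol.isRealSteadySol
  refine ⟨fun hn ↦ hlarge ?_, fun hn ↦ hsmall ?_, hlim ?_ hμ⟩ <;> rify at * <;> linarith
end
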